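/- Let X₁ and X₂ be independent random variables, each exponentially distributed with rate 1. For every α with 0 < α < 1, E[min{X₁ − log₂(α)/2, X₂ − log₂(1−α)/2}] ≤ 1. -/

import Mathlib

/-!
Write `a = -log₂ α / 2`, `b = -log₂ (1 - α) / 2`; by symmetry assume `1/2 ≤ α`, so `a ≤ b`.
Since `𝔼[min(X₁, c)] = 1 - exp(-c)` for `c ≥ 0`, conditioning on `X₂` gives
`𝔼[min(X₁ + a, X₂ + b)] = a + 𝔼[1 - exp(-(X₂ + b - a))] = a + 1 - exp(a - b) / 2`,
and the claim becomes `2 a ≤ exp(a - b)`. With `s = -log α ∈ (0, log 2]` this reads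
`s / log 2 ≤ (exp s - 1) ^ (1 / (2 log 2))`. The difference of the logarithms of the two sides,
`log (exp s - 1) / (2 log 2) - log s + log (log 2)`, vanishes at `s = log 2`, and it is decreasing
on `(0, log 2]` because `1 - exp(-s) ≥ s / (2 log 2)` there: the concave function `1 - exp(-s)`
lies above its chord between `0` and `log 2`.
-/

open MeasureTheory ProbabilityTheory Real

attribute [local instance] Classical.propDecidable

/-- Integration against the exponential law of rate `1`. -/
lemma integral_expMeasure_one (f : ℝ → ℝ) :
    ∫ x, f x ∂(expMeasure 1) = ∫ x in Set.Ioi (0 : ℝ), Real.exp (-x) * f x := by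
  have h : expMeasure 1 = volume.withDensity (exponentialPDF 1) := rfl
  have hm : Measurable (exponentialPDF 1) := (measurable_exponentialPDFReal 1).ennreal_ofReal
  rw [h, integral_withDensity_eq_integral_toReal_smul hm
    (ae_of_all _ fun x => by simp [exponentialPDF]), ← integral_Ici_eq_integral_Ioi,
    ← integral_indicator measurableSet_Ici]
  congr 1
  ext x
  by_cases hx : 0 ≤ x
  · rw [Set.indicator_of_mem (Set.mem_Ici.2 hx), exponentialPDF_of_nonneg hx,
      ENNReal.toReal_ofReal (by positivity)]
    simp
  · rw [Set.indicator_of_notMem (by simpa using hx), exponentialPDF_of_neg (not_le.1 hx)]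
    simp

lemma integral_min_expMeasure_one {c : ℝ} (hc : 0 ≤ c) :
    ∫ x, min x c ∂(expMeasure 1) = 1 - Real.exp (-c) := by
  rw [integral_expMeasure_one, ← Set.Ioc_union_Ioi_eq_Ioi hc]
  have e₁ : Set.EqOn (fun x : ℝ => Real.exp (-x) * min x c) (fun x => Real.exp (-x) * x)
      (Set.Ioc 0 c) := fun x hx => by simp [min_eq_left hx.2]
  have e₂ : Set.EqOn (fun x : ℝ => Real.exp (-x) * min x c) (fun x => Real.exp (-x) * c)
      (Set.Ioi c) := fun x hx => by simp [min_eq_right (le_of_lt (Set.mem_Ioi.1 hx))]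
  have hcont : Continuous fun x : ℝ => Real.exp (-x) * x := by fun_prop
  have i₁ : IntegrableOn (fun x : ℝ => Real.exp (-x) * x) (Set.Ioc 0 c) :=
    hcont.integrableOn_Ioc
  have i₂ : IntegrableOn (fun x : ℝ => Real.exp (-x) * c) (Set.Ioi c) :=
    (integrableOn_exp_neg_Ioi c).mul_const c
  rw [setIntegral_union (Set.Ioc_disjoint_Ioi le_rfl) measurableSet_Ioi
    (i₁.congr_fun e₁.symm measurableSet_Ioc) (i₂.congr_fun e₂.symm measurableSet_Ioi),
    setIntegral_congr_fun measurableSet_Ioc e₁, setIntegral_congr_fun measurableSet_Ioi e₂,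
    integral_mul_const, integral_exp_neg_Ioi, ← intervalIntegral.integral_of_le hc,
    intervalIntegral.integral_eq_sub_of_hasDerivAt (f := fun x => -((x + 1) * Real.exp (-x)))
      (fun x _ => ?_) (hcont.intervalIntegrable _ _)]
  · simp
    ring
  · have h := (((hasDerivAt_id x).add_const 1).mul (hasDerivAt_neg x).exp).neg
    refine h.congr_deriv ?_
    simp
    ring

lemma integral_one_sub_exp_expMeasure_one (d : ℝ) :
    ∫ y, (1 - Real.exp (-(y + d))) ∂(expMeasure 1) = 1 - Real.exp (-d) / 2 := by
  rw [integral_expMeasure_one]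
  have e : ∀ y : ℝ, Real.exp (-y) * (1 - Real.exp (-(y + d))) =
      Real.exp (-y) - Real.exp (-d) * Real.exp ((-2) * y) := fun y => by
    rw [mul_sub, mul_one, ← Real.exp_add, ← Real.exp_add]
    ring_nf
  simp_rw [e]
  rw [integral_sub (integrableOn_exp_neg_Ioi 0)
    ((integrableOn_exp_mul_Ioi (by norm_num) 0).const_mul _), integral_exp_neg_Ioi_zero,
    integral_const_mul, integral_exp_mul_Ioi (by norm_num)]
  simp
  ring

lemma integral_min_le_one {Ω : Type} [MeasurableSpace Ω] {μ : Measure Ω} [IsProbabilityMeasure μ]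
    {X₁ X₂ : Ω → ℝ} (h₁ : Measurable X₁) (h₂ : Measurable X₂) (hind : IndepFun X₁ X₂ μ)
    (hl₁ : Measure.map X₁ μ = expMeasure 1) (hl₂ : Measure.map X₂ μ = expMeasure 1)
    {a b : ℝ} (hab : a ≤ b) (h : 2 * a ≤ Real.exp (a - b)) :
    ∫ ω, min (X₁ ω + a) (X₂ ω + b) ∂μ ≤ 1 := by
  -- In the non-integrable case the integral is `0` by convention, so the bound is free.
  by_cases hint : Integrable (fun ω => min (X₁ ω + a) (X₂ ω + b)) μ
  swap
  · rw [integral_undef hint]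
    exact zero_le_one
  have : IsProbabilityMeasure (expMeasure 1) := isProbabilityMeasure_expMeasure one_pos
  have e : ∀ x y : ℝ, min (x + a) (y + b) = min x (y + (b - a)) + a := fun x y => by
    rw [← min_add_add_right]
    ring_nf
  simp_rw [e] at hint ⊢
  have hint' : Integrable (fun ω => min (X₁ ω) (X₂ ω + (b - a))) μ :=
    (hint.sub (integrable_const a)).congr (ae_of_all _ fun ω => by simp)
  have hmap : μ.map (fun ω => (X₂ ω, X₁ ω)) = (expMeasure 1).prod (expMeasure 1) := by
    rw [(indepFun_iff_map_prod_eq_prod_map_map h₂.aemeasurable h₁.aemeasurable).1 hind.symm,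
      hl₁, hl₂]
  have hg : Measurable fun p : ℝ × ℝ => min p.2 (p.1 + (b - a)) := by fun_prop
  have hpair : AEMeasurable (fun ω => (X₂ ω, X₁ ω)) μ := (h₂.prodMk h₁).aemeasurable
  have hintp : Integrable (fun p : ℝ × ℝ => min p.2 (p.1 + (b - a)))
      ((expMeasure 1).prod (expMeasure 1)) := by
    rw [← hmap, integrable_map_measure hg.aestronglyMeasurable hpair]
    exact hint'
  have key : ∫ ω, min (X₁ ω) (X₂ ω + (b - a)) ∂μ = 1 - Real.exp (-(b - a)) / 2 := by
    have hE := integral_map hpair (f := fun p : ℝ × ℝ => min p.2 (p.1 + (b - a)))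
      hg.aestronglyMeasurable
    rw [← hE, hmap, integral_prod _ hintp, ← integral_one_sub_exp_expMeasure_one]
    have hpos : ∀ᵐ y ∂(expMeasure 1), (0 : ℝ) ≤ y := by
      have h0 : expMeasure 1 (Set.Iio 0) = 0 := by
        rw [show expMeasure 1 = volume.withDensity (exponentialPDF 1) from rfl,
          withDensity_apply _ measurableSet_Iio]
        exact lintegral_exponentialPDF_of_nonpos le_rfl
      rw [ae_iff]
      simpa [Set.Iio] using h0
    refine integral_congr_ae ?_
    filter_upwards [hpos] with y hy
    exact integral_min_expMeasure_one (by linarith)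
  rw [integral_add hint' (integrable_const a), key]
  simp only [integral_const, probReal_univ, one_smul, neg_sub]
  linarith

/-- The concave function `1 - exp (-s)` lies above its chord on `[0, log 2]`. -/
lemma chord_le_one_sub_exp_neg {s : ℝ} (h0 : 0 ≤ s) (h2 : s ≤ Real.log 2) :
    s / (2 * Real.log 2) ≤ 1 - Real.exp (-s) := by
  have hL : 0 < Real.log 2 := Real.log_pos one_lt_two
  have hc := convexOn_exp.2 (Set.mem_univ 0) (Set.mem_univ (-Real.log 2))
    (show 0 ≤ 1 - s / Real.log 2 from sub_nonneg.2 ((div_le_one hL).2 h2))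
    (show 0 ≤ s / Real.log 2 by positivity) (by ring)
  have e : s / Real.log 2 * -Real.log 2 = -s := by field_simp
  simp only [smul_eq_mul, mul_zero, zero_add, e, Real.exp_zero, Real.exp_neg (Real.log 2),
    Real.exp_log two_pos] at hc
  have e' : s / (2 * Real.log 2) = s / Real.log 2 / 2 := by field_simp
  rw [e']
  linarith

lemma log_div_log_two_le {s : ℝ} (h0 : 0 < s) (h2 : s ≤ Real.log 2) :
    Real.log (s / Real.log 2) ≤ Real.log (Real.exp s - 1) / (2 * Real.log 2) := by
  have hL : 0 < Real.log 2 := Real.log_pos one_lt_two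
  have hd : ∀ t : ℝ, 0 < t → HasDerivAt
      (fun t => Real.log (Real.exp t - 1) / (2 * Real.log 2) - Real.log t)
      (Real.exp t / (Real.exp t - 1) / (2 * Real.log 2) - t⁻¹) t := fun t ht => by
    have : 0 < Real.exp t - 1 := by linarith [Real.add_one_lt_exp ht.ne']
    exact ((((Real.hasDerivAt_exp t).sub_const 1).log this.ne').div_const _).sub
      (Real.hasDerivAt_log ht.ne')
  have hanti : AntitoneOn (fun t => Real.log (Real.exp t - 1) / (2 * Real.log 2) - Real.log t)
      (Set.Icc s (Real.log 2)) := by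
    refine antitoneOn_of_deriv_nonpos (convex_Icc _ _)
      (fun t ht => (hd t (h0.trans_le ht.1)).continuousAt.continuousWithinAt)
      (fun t ht => ?_) (fun t ht => ?_)
    · rw [interior_Icc] at ht
      exact (hd t (h0.trans ht.1)).differentiableAt.differentiableWithinAt
    · rw [interior_Icc] at ht
      have ht0 : 0 < t := h0.trans ht.1
      rw [(hd t ht0).deriv, sub_nonpos]
      have hk := chord_le_one_sub_exp_neg ht0.le ht.2.le
      have hp : 0 < Real.exp t - 1 := by linarith [Real.add_one_lt_exp ht0.ne']
      rw [div_le_iff₀ (by positivity)] at hk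
      have hm : Real.exp t * t ≤ (Real.exp t - 1) * (2 * Real.log 2) := by
        have := mul_le_mul_of_nonneg_left hk (Real.exp_pos t).le
        have e : Real.exp t * Real.exp (-t) = 1 := by rw [← Real.exp_add]; simp
        calc Real.exp t * t ≤ _ := this
          _ = (Real.exp t - Real.exp t * Real.exp (-t)) * (2 * Real.log 2) := by ring
          _ = _ := by rw [e]
      rw [div_div, inv_eq_one_div, div_le_div_iff₀ (by positivity) ht0]
      linarith
  have h := hanti (Set.left_mem_Icc.2 h2) (Set.right_mem_Icc.2 h2) h2
  simp only [Real.exp_log two_pos] at h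
  norm_num at h
  rw [Real.log_div h0.ne' hL.ne']
  linarith

/-- The numerical inequality `-log₂ α ≤ ((1 - α) / α) ^ (1 / (2 log 2))` for `1/2 ≤ α < 1`. -/
lemma neg_logb_le {α : ℝ} (hα : 1 / 2 ≤ α) (hα1 : α < 1) :
    2 * (-Real.logb 2 α / 2) ≤
      Real.exp (-Real.logb 2 α / 2 - -Real.logb 2 (1 - α) / 2) := by
  have hL : 0 < Real.log 2 := Real.log_pos one_lt_two
  have hα0 : 0 < α := by linarith
  have hs0 : 0 < -Real.log α := neg_pos.2 (Real.log_neg hα0 hα1)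
  have hs2 : -Real.log α ≤ Real.log 2 := by
    have := Real.log_le_log (by norm_num) hα
    rw [one_div, Real.log_inv] at this
    linarith
  have h := log_div_log_two_le hs0 hs2
  rw [Real.log_le_iff_le_exp (by positivity)] at h
  have e : Real.exp (-Real.log α) - 1 = (1 - α) / α := by
    rw [Real.exp_neg, Real.exp_log hα0]
    field_simp
  rw [e, Real.log_div (by linarith) hα0.ne'] at h
  unfold Real.logb
  convert h using 1
  · ring
  · congr 1
    field_simp
    ring

/-- If `X₁, X₂` are independent `exp(1)` random variables and `0 < α < 1`, then
`𝔼[min {X₁ - log₂ α / 2, X₂ - log₂ (1-α) / 2}] ≤ 1`. -/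
theorem stmt_13 (Ω : Type) [MeasurableSpace Ω] (μ : Measure Ω) [IsProbabilityMeasure μ]
    (X₁ X₂ : Ω → ℝ) (h₁ : Measurable X₁) (h₂ : Measurable X₂)
    (hind : IndepFun X₁ X₂ μ)
    (hl₁ : Measure.map X₁ μ = expMeasure 1) (hl₂ : Measure.map X₂ μ = expMeasure 1)
    (α : ℝ) (hα0 : 0 < α) (hα1 : α < 1) :
    ∫ ω, min (X₁ ω - Real.logb 2 α / 2) (X₂ ω - Real.logb 2 (1 - α) / 2) ∂μ ≤ 1 := by
  simp_rw [sub_eq_add_neg (X₁ _), sub_eq_add_neg (X₂ _), ← neg_div]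
  rcases le_total (1 / 2) α with hα | hα
  · refine integral_min_le_one h₁ h₂ hind hl₁ hl₂ ?_ (neg_logb_le hα hα1)
    have := Real.logb_le_logb_of_le one_lt_two (by linarith) (show 1 - α ≤ α by linarith)
    linarith
  · simp_rw [min_comm (X₁ _ + _)]
    have h := neg_logb_le (α := 1 - α) (by linarith) (by linarith)
    rw [sub_sub_cancel] at h
    refine integral_min_le_one h₂ h₁ hind.symm hl₂ hl₁ ?_ h
    have := Real.logb_le_logb_of_le one_lt_two hα0 (show α ≤ 1 - α by linarith)
    linarith
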